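/- arXiv:1607.06294 — 2 statements merged into one kernel-verified Lean document; each statement's English description precedes it below -/
import Mathlib

section
/- For every network (X, A_X), the nonreciprocal clustering output u^NR_X, defined by u^NR_X(x,x') = max(ũ*_X(x,x'), ũ*_X(x',x)) where ũ*_X is the directed minimum chain cost, is a valid ultrametric on X: it is nonnegative, u^NR_X(x,x') = 0 iff x = x', it is symmetric, and it satisfies the strong triangle inequality u^NR_X(x,x'') ≤ max(u^NR_X(x,x'), u^NR_X(x',x'')) for all x,x',x''. -/
noncomputable section

/-- A dissimilarity function on a node set: nonnegative and zero exactly on the diagonal.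
It need not be symmetric nor satisfy the triangle inequality. -/
def IsDissim {X : Type} (A : X → X → ℝ) : Prop :=
  (∀ x x', 0 ≤ A x x') ∧ (∀ x x', A x x' = 0 ↔ x = x')

/-- A symmetric dissimilarity. -/
def IsSym {X : Type} (A : X → X → ℝ) : Prop := ∀ x x', A x x' = A x' x

/-- An ultrametric: nonnegative, zero exactly on the diagonal, symmetric, and
satisfying the strong triangle inequality. -/
def IsUltrametric {X : Type} (u : X → X → ℝ) : Prop :=
  (∀ x x', 0 ≤ u x x') ∧ (∀ x x', u x x' = 0 ↔ x = x') ∧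
    (∀ x x', u x x' = u x' x) ∧
    (∀ x x' x'', u x x'' ≤ max (u x x') (u x' x''))

/-- The cost of the chain `x :: l`: the maximum dissimilarity over consecutive links. -/
def chainCost {X : Type} (A : X → X → ℝ) : X → List X → ℝ
  | _, [] => 0
  | x, y :: l => max (A x y) (chainCost A y l)

/-- The set of costs of chains from `x` to `x'`. -/
def chainCosts {X : Type} (A : X → X → ℝ) (x x' : X) : Set ℝ :=
  {c | ∃ l : List X, (x :: l).getLast (List.cons_ne_nil x l) = x' ∧ chainCost A x l = c}

/-- The directed minimum chain cost `ũ*_X(x,x')`: minimum cost over all chains from `x` to `x'`. -/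
def minChainCost {X : Type} (A : X → X → ℝ) (x x' : X) : ℝ :=
  sInf (chainCosts A x x')

/-- The nonreciprocal ultrametric `u^NR`. -/
def nonrecipUltra {X : Type} (A : X → X → ℝ) (x x' : X) : ℝ :=
  max (minChainCost A x x') (minChainCost A x' x)

/-- The reciprocal ultrametric `u^R`. -/
def recipUltra {X : Type} (A : X → X → ℝ) (x x' : X) : ℝ :=
  minChainCost (fun a b => max (A a b) (A b a)) x x'

/-- The unilateral ultrametric `u^U`. -/
def uniUltra {X : Type} (A : X → X → ℝ) (x x' : X) : ℝ :=
  minChainCost (fun a b => min (A a b) (A b a)) x x'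

/-- The minimum loop cost `mlc(X, A_X)`: minimum cost over loops, i.e. chains from some
node `x` back to itself containing at least one node different from `x`. -/
def mlc {X : Type} (A : X → X → ℝ) : ℝ :=
  sInf {c | ∃ (x : X) (l : List X),
    (x :: l).getLast (List.cons_ne_nil x l) = x ∧ (∃ y ∈ l, y ≠ x) ∧ chainCost A x l = c}

/-- The separation `sep(X, A_X)`: minimum dissimilarity over pairs of distinct nodes. -/
def sep {X : Type} (A : X → X → ℝ) : ℝ :=
  sInf {c | ∃ x x' : X, x ≠ x' ∧ A x x' = c}

/-- A hierarchical clustering method: assigns to every (finite) network an output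
two-variable function on the same node set. -/
abbrev HCMethod := ∀ (X : Type) [Fintype X], (X → X → ℝ) → X → X → ℝ

/-- A hierarchical clustering method outputs an ultrametric on every network. -/
def IsHCMethod (H : HCMethod) : Prop :=
  ∀ (X : Type) [Fintype X] (A : X → X → ℝ), IsDissim A → IsUltrametric (H X A)

/-- `p, q` are the two (distinct) nodes of a two-node set. -/
def TwoNode {X : Type} (p q : X) : Prop := p ≠ q ∧ ∀ x : X, x = p ∨ x = q

/-- Axiom of Value (A1): on every two-node network the output clusters the two nodes at
the maximum of the two dissimilarities. -/
def AxiomValue (H : HCMethod) : Prop :=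
  ∀ (X : Type) [Fintype X] (p q : X), TwoNode p q →
    ∀ A : X → X → ℝ, IsDissim A → H X A p q = max (A p q) (A q p)

/-- Axiom of Transformation (A2): dissimilarity-reducing maps do not increase output values. -/
def AxiomTransform (H : HCMethod) : Prop :=
  ∀ (X Y : Type) [Fintype X] [Fintype Y] (AX : X → X → ℝ) (AY : Y → Y → ℝ),
    IsDissim AX → IsDissim AY →
    ∀ φ : X → Y, (∀ x x', AY (φ x) (φ x') ≤ AX x x') →
    ∀ x x' : X, H Y AY (φ x) (φ x') ≤ H X AX x x'

/-- The canonical dissimilarity `A_{n,α,β}` on `Fin n`: `α` for `i > j`, `β` for `i < j`,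
`0` on the diagonal. -/
def canonDissim (n : ℕ) (α β : ℝ) : Fin n → Fin n → ℝ :=
  fun i j => if i = j then 0 else if j < i then α else β

/-- Extended Axiom of Value (A1'): on every permuted canonical network `Δ_n(α,β,Π)` the
output ultrametric equals `max(α,β)` off the diagonal. -/
def ExtAxiomValue (H : HCMethod) : Prop :=
  ∀ (n : ℕ) (α β : ℝ), 0 < α → 0 < β → ∀ π : Equiv.Perm (Fin n),
    ∀ i j : Fin n, i ≠ j →
      H (Fin n) (fun i j => canonDissim n α β (π i) (π j)) i j = max α β

/-- Alternative Axiom of Value (A1''): on every two-node network the output clusters the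
two nodes at the minimum of the two dissimilarities. -/
def AltAxiomValue (H : HCMethod) : Prop :=
  ∀ (X : Type) [Fintype X] (p q : X), TwoNode p q →
    ∀ A : X → X → ℝ, IsDissim A → H X A p q = min (A p q) (A q p)

/-- Agnostic Axiom of Value (A1'''): on every two-node network the output value lies
between the minimum and maximum of the two dissimilarities. -/
def AgnAxiomValue (H : HCMethod) : Prop :=
  ∀ (X : Type) [Fintype X] (p q : X), TwoNode p q →
    ∀ A : X → X → ℝ, IsDissim A →
      min (A p q) (A q p) ≤ H X A p q ∧ H X A p q ≤ max (A p q) (A q p)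

theorem chainCost_nonneg_aux {X : Type} {A : X → X → ℝ} (x : X) (l : List X) :
    0 ≤ chainCost A x l := by
  induction l generalizing x with
  | nil => simp [chainCost]
  | cons y l ih => exact le_trans (ih y) (le_max_right _ _)

theorem chainCosts_bdd_aux {X : Type} (A : X → X → ℝ) (x x' : X) :
    BddBelow (chainCosts A x x') :=
  ⟨0, by rintro c ⟨l, -, rfl⟩; exact chainCost_nonneg_aux x l⟩

theorem chainCosts_nonempty_aux {X : Type} (A : X → X → ℝ) (x x' : X) :
    (chainCosts A x x').Nonempty :=
  ⟨_, [x'], by simp, rfl⟩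

theorem minChainCost_nonneg_aux {X : Type} (A : X → X → ℝ) (x x' : X) :
    0 ≤ minChainCost A x x' := by
  apply le_csInf (chainCosts_nonempty_aux A x x')
  rintro c ⟨l, -, rfl⟩
  exact chainCost_nonneg_aux x l

theorem minChainCost_self_aux {X : Type} (A : X → X → ℝ) (x : X) :
    minChainCost A x x = 0 :=
  le_antisymm (csInf_le (chainCosts_bdd_aux A x x) ⟨[], by simp, rfl⟩)
    (minChainCost_nonneg_aux A x x)

theorem chainCost_ge_aux {X : Type} {A : X → X → ℝ} {d : ℝ}
    (hd : ∀ a b, a ≠ b → d ≤ A a b) (x x' : X) (hne : x ≠ x') (l : List X)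
    (hl : (x :: l).getLast (List.cons_ne_nil x l) = x') : d ≤ chainCost A x l := by
  induction l generalizing x with
  | nil => exact absurd (by simpa using hl) hne
  | cons y l ih =>
    by_cases h : x = y
    · subst h
      exact le_trans (ih x hne (by simpa using hl)) (le_max_right _ _)
    · exact le_trans (hd x y h) (le_max_left _ _)

theorem minChainCost_pos_aux {X : Type} [Fintype X] {A : X → X → ℝ} (hA : IsDissim A)
    (x x' : X) (hne : x ≠ x') : 0 < minChainCost A x x' := by
  haveI : Nonempty {p : X × X // p.1 ≠ p.2} := ⟨⟨(x, x'), hne⟩⟩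
  obtain ⟨⟨p, hp⟩, hmin⟩ :=
    Finite.exists_min (fun p : {p : X × X // p.1 ≠ p.2} => A p.1.1 p.1.2)
  have hpos : 0 < A p.1 p.2 :=
    lt_of_le_of_ne (hA.1 _ _) (fun h => hp ((hA.2 _ _).1 h.symm))
  refine lt_of_lt_of_le hpos (le_csInf (chainCosts_nonempty_aux A x x') ?_)
  rintro c ⟨l, hl, rfl⟩
  exact chainCost_ge_aux (fun a b hab => hmin ⟨(a, b), hab⟩) x x' hne l hl

theorem chain_append_aux {X : Type} (A : X → X → ℝ) (x y z : X) (l m : List X)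
    (hl : (x :: l).getLast (List.cons_ne_nil x l) = y)
    (hm : (y :: m).getLast (List.cons_ne_nil y m) = z) :
    (x :: (l ++ m)).getLast (List.cons_ne_nil x (l ++ m)) = z ∧
      chainCost A x (l ++ m) = max (chainCost A x l) (chainCost A y m) := by
  induction l generalizing x with
  | nil =>
    have h : x = y := by simpa using hl
    subst h
    exact ⟨hm, (max_eq_right (chainCost_nonneg_aux x m)).symm⟩
  | cons w l ih =>
    obtain ⟨h1, h2⟩ := ih w (by simpa using hl)
    refine ⟨by simpa using h1, ?_⟩
    simp only [List.cons_append, chainCost, h2, max_assoc]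

theorem minChainCost_tri_aux {X : Type} (A : X → X → ℝ) (x y z : X) :
    minChainCost A x z ≤ max (minChainCost A x y) (minChainCost A y z) := by
  apply le_of_forall_gt
  intro c hc
  obtain ⟨hc1, hc2⟩ := max_lt_iff.1 hc
  obtain ⟨_, ⟨l, hl, rfl⟩, h1⟩ := exists_lt_of_csInf_lt (chainCosts_nonempty_aux A x y) hc1
  obtain ⟨_, ⟨m, hm, rfl⟩, h2⟩ := exists_lt_of_csInf_lt (chainCosts_nonempty_aux A y z) hc2
  obtain ⟨h3, h4⟩ := chain_append_aux A x y z l m hl hm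
  refine lt_of_le_of_lt (csInf_le (chainCosts_bdd_aux A x z) ⟨l ++ m, h3, h4⟩) ?_
  exact max_lt h1 h2

/-- The nonreciprocal clustering output is a valid ultrametric. -/
theorem nonrecipUltra_isUltrametric
    (X : Type) [Fintype X] (A : X → X → ℝ) (hA : IsDissim A) :
    IsUltrametric (nonrecipUltra A) := by
  refine ⟨fun x x' => le_max_of_le_left (minChainCost_nonneg_aux A x x'), fun x x' => ⟨?_, ?_⟩,
    fun x x' => max_comm _ _, fun x y z => max_le ?_ ?_⟩
  · intro h
    by_contra hne
    exact absurd h (ne_of_gt (lt_max_of_lt_left (minChainCost_pos_aux hA x x' hne)))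
  · rintro rfl
    simp [nonrecipUltra, minChainCost_self_aux]
  · exact (minChainCost_tri_aux A x y z).trans
      (max_le_max (le_max_left _ _) (le_max_left _ _))
  · refine (minChainCost_tri_aux A z y x).trans ?_
    rw [max_comm]
    exact max_le_max (le_max_right _ _) (le_max_right _ _)
end
end

section
/- Let H be a hierarchical clustering method satisfying the Agnostic Axiom of Value (A1''') and the Axiom of Transformation (A2). Then for every network (X, A_X), writing u_X = H(X, A_X), for all pairs of nodes x, x' ∈ X it holds that u^U_X(x,x') ≤ u_X(x,x') ≤ u^R_X(x,x'), where u^U_X and u^R_X denote the unilateral and reciprocal ultrametrics. -/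
noncomputable section

/-- Two-node dissimilarity on `Bool`. -/
def boolDissim (α β : ℝ) : Bool → Bool → ℝ
  | false, true => α
  | true, false => β
  | _, _ => 0

lemma boolDissim_isDissim {α β : ℝ} (hα : 0 < α) (hβ : 0 < β) :
    IsDissim (boolDissim α β) := by
  constructor
  · intro a b
    cases a <;> cases b <;> simp [boolDissim, hα.le, hβ.le]
  · intro a b
    cases a <;> cases b <;> simp [boolDissim, hα.ne', hβ.ne']

lemma bool_twoNode : TwoNode false true := by
  refine ⟨by simp, fun x => ?_⟩
  cases x <;> simp

lemma chainCost_nonneg {X : Type} (B : X → X → ℝ) (x : X) (l : List X) :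
    0 ≤ chainCost B x l := by
  induction l generalizing x with
  | nil => simp [chainCost]
  | cons y l ih => exact le_max_of_le_right (ih y)

lemma pos_of_ne {X : Type} {A : X → X → ℝ} (hA : IsDissim A) {a b : X} (h : a ≠ b) :
    0 < A a b :=
  lt_of_le_of_ne (hA.1 a b) (fun h0 => h ((hA.2 a b).1 h0.symm))

lemma le_link (H : HCMethod) (hH : IsHCMethod H) (hA1 : AgnAxiomValue H)
    (hA2 : AxiomTransform H) (X : Type) [Fintype X] (A : X → X → ℝ) (hA : IsDissim A)
    (a b : X) : H X A a b ≤ max (A a b) (A b a) := by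
  by_cases h : a = b
  · subst h
    rw [((hH X A hA).2.1 a a).2 rfl]
    exact le_max_of_le_left (hA.1 a a)
  · have hD := boolDissim_isDissim (pos_of_ne hA h) (pos_of_ne hA (Ne.symm h))
    have h1 := (hA1 Bool false true bool_twoNode _ hD).2
    have h2 := hA2 Bool X _ A hD hA (fun t => bif t then b else a) (by
      intro s t
      cases s <;> cases t <;> simp [boolDissim, (hA.2 _ _).2]) false true
    exact le_trans h2 h1

lemma le_chain (H : HCMethod) (hH : IsHCMethod H) (hA1 : AgnAxiomValue H)
    (hA2 : AxiomTransform H) (X : Type) [Fintype X] (A : X → X → ℝ) (hA : IsDissim A)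
    (x' : X) (l : List X) : ∀ x : X, (x :: l).getLast (List.cons_ne_nil x l) = x' →
    H X A x x' ≤ chainCost (fun a b => max (A a b) (A b a)) x l := by
  induction l with
  | nil =>
    intro x h
    have h : x = x' := by simpa using h
    exact (((hH X A hA).2.1 x x').2 h).le
  | cons y l ih =>
    intro x h
    rw [List.getLast_cons (List.cons_ne_nil y l)] at h
    exact le_trans ((hH X A hA).2.2.2 x y x')
      (max_le_max (le_link H hH hA1 hA2 X A hA x y) (ih y h))

/-- Any method satisfying the Agnostic Axiom of Value (A1''') and (A2) lies
between unilateral and reciprocal clustering. -/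
theorem agnostic_extremal_ultrametrics
    (H : HCMethod) (hH : IsHCMethod H) (hA1''' : AgnAxiomValue H) (hA2 : AxiomTransform H)
    (X : Type) [Fintype X] (A : X → X → ℝ) (hA : IsDissim A) (x x' : X) :
    uniUltra A x x' ≤ H X A x x' ∧ H X A x x' ≤ recipUltra A x x' := by
  classical
  constructor
  · by_contra hcon
    have hlt : H X A x x' < uniUltra A x x' := not_le.1 hcon
    have hδ : 0 < uniUltra A x x' := lt_of_le_of_lt ((hH X A hA).1 x x') hlt
    generalize hd : uniUltra A x x' = δ at hlt hδ
    let T : X → Prop := fun z => ∃ l : List X,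
      (z :: l).getLast (List.cons_ne_nil z l) = x' ∧
        chainCost (fun a b => min (A a b) (A b a)) z l < δ
    have hx' : T x' := ⟨[], rfl, hδ⟩
    have hx : ¬ T x := by
      rintro ⟨l, hl, hc⟩
      refine absurd hc (not_lt.2 ?_)
      rw [← hd]
      exact csInf_le ⟨0, by rintro _ ⟨m, _, rfl⟩; exact chainCost_nonneg _ _ _⟩ ⟨l, hl, rfl⟩
    have key : ∀ w z, ¬ T w → T z → δ ≤ min (A w z) (A z w) := by
      rintro w z hw ⟨l, hl, hc⟩
      by_contra hm
      refine hw ⟨z :: l, ?_, max_lt (not_le.1 hm) hc⟩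
      rw [List.getLast_cons (List.cons_ne_nil z l)]
      exact hl
    have hD := boolDissim_isDissim hδ hδ
    have h1 := (hA1''' Bool false true bool_twoNode _ hD).1
    have h2 := hA2 X Bool A _ hA hD (fun z => decide (T z)) (by
      intro w z
      by_cases hw : T w <;> by_cases hz : T z
      · simpa [hw, hz, boolDissim] using hA.1 w z
      · simpa [hw, hz, boolDissim] using (key z w hz hw).trans (min_le_right _ _)
      · simpa [hw, hz, boolDissim] using (key w z hw hz).trans (min_le_left _ _)
      · simpa [hw, hz, boolDissim] using hA.1 w z) x x'
    simp only [hx, hx', decide_true, decide_false] at h2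
    have h3 : min (boolDissim δ δ false true) (boolDissim δ δ true false) = δ := by
      simp [boolDissim]
    rw [h3] at h1
    linarith
  · refine le_csInf ⟨_, [x'], rfl, rfl⟩ ?_
    rintro _ ⟨l, hl, rfl⟩
    exact le_chain H hH hA1''' hA2 X A hA x' l x hl
end
end
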